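/- Assume in addition 1 − 4a − 2b + 3a² − 6ab > 0, let ε satisfy 0 < ε < (1−3a−2b)/(4a) − c, and put T = [−1 + c + ε, 1 − c − ε]. Then there exist n₀ ∈ ℕ and constants 0 < α ≤ β < ∞ such that α ≤ m_T^{(n₀)}(x, y) ≤ β for all x, y ∈ T. -/

import Mathlib

open MeasureTheory

/-- The triangular density: `f_t(z) = (t − |z|)/t²` for `|z| ≤ t` and `0` otherwise. -/
noncomputable def triangularDensity (t z : ℝ) : ℝ :=
  if |z| ≤ t then (t - |z|) / t ^ 2 else 0

/-- The kernel `m_T(x,y)` of the branching process, with `t = (1−3a−2b)/2`: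
`m_T(x,y) = [a f_t(ay + 1/2 + a/2 − b − x) + 2a f_t(ay − x) + a f_t(ay − 1/2 − a/2 + b − x)]·1_T(y)`. -/
noncomputable def larssonKernel (a b : ℝ) (T : Set ℝ) (x y : ℝ) : ℝ :=
  (a * triangularDensity ((1 - 3 * a - 2 * b) / 2) (a * y + 1 / 2 + a / 2 - b - x) +
      2 * a * triangularDensity ((1 - 3 * a - 2 * b) / 2) (a * y - x) +
      a * triangularDensity ((1 - 3 * a - 2 * b) / 2) (a * y - 1 / 2 - a / 2 + b - x)) *
    Set.indicator T (fun _ => (1 : ℝ)) y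

/-- The iterated kernels, with the index shifted by one:
`larssonKernelIter a b T n = m_T^{(n+1)}`, i.e. `larssonKernelIter a b T 0 = m_T^{(1)} = m_T`
and `m_T^{(n+1)}(x,y) = ∫_T m_T^{(n)}(x,z) m_T(z,y) dz`. -/
noncomputable def larssonKernelIter (a b : ℝ) (T : Set ℝ) : ℕ → ℝ → ℝ → ℝ
  | 0 => larssonKernel a b T
  | (n + 1) => fun x y => ∫ z in T, larssonKernelIter a b T n x z * larssonKernel a b T z y

/-- kernel without the indicator -/
noncomputable def gKer (a b : ℝ) (x y : ℝ) : ℝ :=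
  a * triangularDensity ((1 - 3 * a - 2 * b) / 2) (a * y + 1 / 2 + a / 2 - b - x) +
      2 * a * triangularDensity ((1 - 3 * a - 2 * b) / 2) (a * y - x) +
      a * triangularDensity ((1 - 3 * a - 2 * b) / 2) (a * y - 1 / 2 - a / 2 + b - x)

/-- iterates of the kernel without the indicator -/
noncomputable def gIter (a b L : ℝ) : ℕ → ℝ → ℝ → ℝ
  | 0 => gKer a b
  | (n + 1) => fun x y => ∫ z in (-L)..L, gIter a b L n x z * gKer a b z y

lemma tri_eq {t : ℝ} (z : ℝ) : triangularDensity t z = max 0 (t - |z|) / t ^ 2 := by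
  unfold triangularDensity
  split_ifs with h
  · rw [max_eq_right (by linarith)]
  · rw [max_eq_left (by linarith)]; simp

lemma tri_cont (t : ℝ) : Continuous (triangularDensity t) := by
  have : triangularDensity t = fun z => max 0 (t - |z|) / t ^ 2 := funext fun z => tri_eq z
  rw [this]; fun_prop

lemma tri_nonneg (t z : ℝ) : 0 ≤ triangularDensity t z := by
  rw [tri_eq]; positivity

lemma tri_pos {t z : ℝ} (h : |z| < t) : 0 < triangularDensity t z := by
  have ht : 0 < t := lt_of_le_of_lt (abs_nonneg z) h
  rw [tri_eq, max_eq_right (by linarith)]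
  have : 0 < t - |z| := by linarith
  positivity

lemma gKer_cont (a b : ℝ) : Continuous (fun p : ℝ × ℝ => gKer a b p.1 p.2) := by
  have h := tri_cont ((1 - 3 * a - 2 * b) / 2)
  unfold gKer
  fun_prop

lemma gKer_nonneg {a : ℝ} (ha : 0 < a) (b x y : ℝ) : 0 ≤ gKer a b x y := by
  have h := tri_nonneg ((1 - 3 * a - 2 * b) / 2)
  have h1 := h (a * y + 1 / 2 + a / 2 - b - x)
  have h2 := h (a * y - x)
  have h3 := h (a * y - 1 / 2 - a / 2 + b - x)
  unfold gKer
  positivity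

lemma gKer_pos {a : ℝ} (ha : 0 < a) (b x y k : ℝ) (hk : k = -1 ∨ k = 0 ∨ k = 1)
    (h : |a * y + k * (1 / 2 + a / 2 - b) - x| < (1 - 3 * a - 2 * b) / 2) : 0 < gKer a b x y := by
  have h' := tri_nonneg ((1 - 3 * a - 2 * b) / 2)
  have h1 := h' (a * y + 1 / 2 + a / 2 - b - x)
  have h2 := h' (a * y - x)
  have h3 := h' (a * y - 1 / 2 - a / 2 + b - x)
  have hp := tri_pos h
  unfold gKer
  rcases hk with rfl | rfl | rfl
  · rw [show a * y + -1 * (1 / 2 + a / 2 - b) - x = a * y - 1 / 2 - a / 2 + b - x by ring] at hp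
    positivity
  · rw [show a * y + 0 * (1 / 2 + a / 2 - b) - x = a * y - x by ring] at hp
    positivity
  · rw [show a * y + 1 * (1 / 2 + a / 2 - b) - x = a * y + 1 / 2 + a / 2 - b - x by ring] at hp
    positivity

lemma gIter_cont (a b L : ℝ) (n : ℕ) : Continuous (fun p : ℝ × ℝ => gIter a b L n p.1 p.2) := by
  induction n with
  | zero => exact gKer_cont a b
  | succ n ih =>
    simp only [gIter]
    apply intervalIntegral.continuous_parametric_intervalIntegral_of_continuous'
    have h1 : Continuous (fun q : (ℝ × ℝ) × ℝ => gIter a b L n q.1.1 q.2) :=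
      ih.comp (f := fun q : (ℝ × ℝ) × ℝ => (q.1.1, q.2)) (by fun_prop)
    have h2 : Continuous (fun q : (ℝ × ℝ) × ℝ => gKer a b q.2 q.1.2) :=
      (gKer_cont a b).comp (f := fun q : (ℝ × ℝ) × ℝ => (q.2, q.1.2)) (by fun_prop)
    exact h1.mul h2

lemma gIter_nonneg {a : ℝ} (ha : 0 < a) (b : ℝ) {L : ℝ} (hL : 0 < L) (n : ℕ) (x y : ℝ) :
    0 ≤ gIter a b L n x y := by
  induction n generalizing y with
  | zero => exact gKer_nonneg ha b x y
  | succ n ih =>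
    exact intervalIntegral.integral_nonneg (by linarith)
      fun z _ => mul_nonneg (ih z) (gKer_nonneg ha b z y)

lemma gIter_succ_pos {a : ℝ} (ha : 0 < a) (b : ℝ) {L : ℝ} (hL : 0 < L) (n : ℕ) (x y z : ℝ)
    (hz : z ∈ Set.Icc (-L) L) (h1 : 0 < gIter a b L n x z) (h2 : 0 < gKer a b z y) :
    0 < gIter a b L (n + 1) x y := by
  refine intervalIntegral.integral_pos (by linarith) ?_
    (fun w _ => mul_nonneg (gIter_nonneg ha b hL n x w) (gKer_nonneg ha b w y))
    ⟨z, hz, mul_pos h1 h2⟩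
  have c1 : Continuous (fun w => gIter a b L n x w) :=
    (gIter_cont a b L n).comp (f := fun w => (x, w)) (by fun_prop)
  have c2 : Continuous (fun w => gKer a b w y) :=
    (gKer_cont a b).comp (f := fun w => (w, y)) (by fun_prop)
  exact (c1.mul c2).continuousOn

lemma iter_eq (a b : ℝ) {L : ℝ} (hL : 0 < L) (n : ℕ) (x y : ℝ) (hy : y ∈ Set.Icc (-L) L) :
    larssonKernelIter a b (Set.Icc (-L) L) n x y = gIter a b L n x y := by
  have key : ∀ z, larssonKernel a b (Set.Icc (-L) L) z y = gKer a b z y := fun z => by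
    simp only [larssonKernel, gKer, Set.indicator_of_mem hy, mul_one]
  induction n generalizing y with
  | zero => exact key x
  | succ n ih =>
    simp only [larssonKernelIter, gIter]
    rw [intervalIntegral.integral_of_le (by linarith), ← integral_Icc_eq_integral_Ioc]
    refine setIntegral_congr_fun measurableSet_Icc fun z hz => ?_
    have hk : ∀ z', larssonKernel a b (Set.Icc (-L) L) z' z = gKer a b z' z := fun z' => by
      simp only [larssonKernel, gKer, Set.indicator_of_mem hz, mul_one]
    simp only [key, ih z hz hk]

lemma step {a b L s t δ : ℝ} (ha : 0 < a) (ha3 : 3 * a < 1) (hL : 0 < L) (hδ : 0 < δ)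
    (ht : t = (1 - 3 * a - 2 * b) / 2) (hs : s = t - δ) (hδt : δ ≤ t)
    (hc1 : (1 / 2 + a / 2 - b) - a * L - s ≤ a * L + s)
    (hc2 : L ≤ (1 / 2 + a / 2 - b) + a * L + s)
    (u v : ℝ) (hu : -L ≤ u) (huv : u ≤ v) (hv : v ≤ L) :
    ∃ u2 v2, -L ≤ u2 ∧ u2 ≤ v2 ∧ v2 ≤ L ∧ min (2 * L) (v - u + δ) ≤ v2 - u2 ∧
      ∀ y ∈ Set.Icc u2 v2, ∃ z ∈ Set.Icc u v, 0 < gKer a b z y := by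
  obtain ⟨k, u', v', hk, h1, h2, h3, h4, h5⟩ : ∃ k u' v' : ℝ, (k = -1 ∨ k = 0 ∨ k = 1) ∧
      u ≤ u' ∧ v' ≤ v ∧ v' - u' = (v - u) / 3 ∧ k * (1 / 2 + a / 2 - b) - a * L - s ≤ u' ∧
      v' ≤ k * (1 / 2 + a / 2 - b) + a * L + s := by
    by_cases c1 : u + (v - u) / 3 ≤ -(a * L + s)
    · exact ⟨-1, u, u + (v - u) / 3, by simp, by linarith, by linarith, by ring,
        by linarith, by linarith⟩
    by_cases c2 : a * L + s ≤ v - (v - u) / 3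
    · exact ⟨1, v - (v - u) / 3, v, by simp, by linarith, by linarith, by ring,
        by linarith, by linarith⟩
    push Not at c1 c2
    exact ⟨0, u + (v - u) / 3, v - (v - u) / 3, by simp, by linarith, by linarith, by ring,
      by linarith, by linarith⟩
  set d := 1 / 2 + a / 2 - b with hd
  have hlen : min (2 * L) (v - u + δ) ≤
      min L ((v' - k * d + (t - δ / 2)) / a) - max (-L) ((u' - k * d - (t - δ / 2)) / a) := by
    have hx : (v - u + δ) * a ≤ v' - u' + δ / 2 := by nlinarith
    have e : ∀ w, v - u + δ ≤ w ↔ (v - u + δ) * a ≤ w * a := fun w =>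
      (mul_le_mul_iff_left₀ ha).symm
    rcases min_cases L ((v' - k * d + (t - δ / 2)) / a) with ⟨e1, _⟩ | ⟨e1, _⟩ <;>
    rcases max_cases (-L) ((u' - k * d - (t - δ / 2)) / a) with ⟨e2, _⟩ | ⟨e2, _⟩ <;>
    rw [e1, e2]
    · exact (min_le_left _ _).trans (by linarith)
    all_goals
      refine (min_le_right _ _).trans ?_
      rw [e]
      simp only [sub_mul, div_mul_cancel₀ _ ha.ne']
      nlinarith
  refine ⟨_, _, le_max_left _ _, ?_, min_le_left _ _, hlen, ?_⟩
  · have : 0 ≤ min (2 * L) (v - u + δ) := le_min (by linarith) (by linarith)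
    linarith
  · rintro y ⟨hy1, hy2⟩
    have y1 := (le_max_right _ _).trans hy1
    have y2 := hy2.trans (min_le_right _ _)
    rw [div_le_iff₀ ha] at y1
    rw [le_div_iff₀ ha] at y2
    have main : ∃ z ∈ Set.Icc u' v', |a * y + k * d - z| < t := by
      by_cases g1 : a * y + k * d ≤ u'
      · exact ⟨u', ⟨le_refl _, by linarith⟩, by rw [abs_lt]; constructor <;> linarith⟩
      by_cases g2 : v' ≤ a * y + k * d
      · exact ⟨v', ⟨by linarith, le_refl _⟩, by rw [abs_lt]; constructor <;> linarith⟩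
      push Not at g1 g2
      exact ⟨a * y + k * d, ⟨g1.le, g2.le⟩, by rw [abs_lt]; constructor <;> linarith⟩
    obtain ⟨z, hz, hz'⟩ := main
    exact ⟨z, ⟨by linarith [hz.1], by linarith [hz.2]⟩, gKer_pos ha b z y k hk (by rw [← ht]; exact hz')⟩

lemma reach {a b L s t δ : ℝ} (ha : 0 < a) (ha3 : 3 * a < 1) (hL : 0 < L) (hδ : 0 < δ)
    (ht : t = (1 - 3 * a - 2 * b) / 2) (hs : s = t - δ) (hδt : δ ≤ t)
    (hc1 : (1 / 2 + a / 2 - b) - a * L - s ≤ a * L + s)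
    (hc2 : L ≤ (1 / 2 + a / 2 - b) + a * L + s)
    (n : ℕ) (x : ℝ) (hx : x ∈ Set.Icc (-L) L) :
    ∃ u v, -L ≤ u ∧ u ≤ v ∧ v ≤ L ∧ min (2 * L) ((n + 1) * δ) ≤ v - u ∧
      ∀ y ∈ Set.Icc u v, 0 < gIter a b L n x y := by
  induction n with
  | zero =>
    obtain ⟨u, v, h1, h2, h3, h4, h5⟩ := step ha ha3 hL hδ ht hs hδt hc1 hc2 x x hx.1 le_rfl hx.2
    refine ⟨u, v, h1, h2, h3, by simpa using h4, fun y hy => ?_⟩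
    obtain ⟨z, hz, hz'⟩ := h5 y hy
    rw [Set.Icc_self, Set.mem_singleton_iff] at hz
    subst hz
    exact hz'
  | succ n ih =>
    obtain ⟨u, v, h1, h2, h3, h4, h5⟩ := ih
    obtain ⟨u2, v2, k1, k2, k3, k4, k5⟩ := step ha ha3 hL hδ ht hs hδt hc1 hc2 u v h1 h2 h3
    refine ⟨u2, v2, k1, k2, k3, le_trans ?_ k4, fun y hy => ?_⟩
    · push_cast
      refine le_min (min_le_left _ _) ?_
      rcases min_le_iff.1 h4 with h | h
      · exact (min_le_left _ _).trans (by linarith)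
      · exact (min_le_right _ _).trans (by linarith)
    · obtain ⟨z, hz, hz'⟩ := k5 y hy
      exact gIter_succ_pos ha b hL n x y z ⟨h1.trans hz.1, hz.2.trans h3⟩ (h5 z hz) hz'

/-- In the simple case `1 − 4a − 2b + 3a² − 6ab > 0`, with `T = [−1 + c + ε, 1 − c − ε]`,
some iterate of the kernel is bounded between positive constants on `T × T`.
(Recall `larssonKernelIter a b T n = m_T^{(n+1)}`.) -/
theorem kernel_iterate_uniformly_bounded_simple_case
    (a b : ℝ) (ha : 1 / 4 < a) (hb : 0 < b) (hab : 3 * a + 2 * b < 1)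
    (c : ℝ) (hc : c = 2 * b / (1 - a))
    (hsimple : 0 < 1 - 4 * a - 2 * b + 3 * a ^ 2 - 6 * a * b)
    (ε : ℝ) (hε : 0 < ε) (hε' : ε < (1 - 3 * a - 2 * b) / (4 * a) - c)
    (T : Set ℝ) (hT : T = Set.Icc (-1 + c + ε) (1 - c - ε)) :
    ∃ n₀ : ℕ, ∃ α β : ℝ, 0 < α ∧ α ≤ β ∧
      ∀ x ∈ T, ∀ y ∈ T,
        α ≤ larssonKernelIter a b T n₀ x y ∧ larssonKernelIter a b T n₀ x y ≤ β := by
  have ha0 : 0 < a := by linarith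
  have ha3 : 3 * a < 1 := by linarith
  have hcm : c * (1 - a) = 2 * b := by
    rw [hc, div_mul_cancel₀]; linarith
  obtain ⟨L, hLdef⟩ : ∃ L, L = 1 - c - ε := ⟨_, rfl⟩
  obtain ⟨t, ht⟩ : ∃ t, t = (1 - 3 * a - 2 * b) / 2 := ⟨_, rfl⟩
  have ht0 : 0 < t := by linarith
  have hT' : T = Set.Icc (-L) L := by rw [hT, hLdef]; congr 1; ring
  have hcε : (c + ε) * (2 * a) < t := by
    have : c + ε < (1 - 3 * a - 2 * b) / (4 * a) := by linarith
    rw [lt_div_iff₀ (by linarith)] at this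
    linarith
  have hL : 0 < L := by
    have : (c + ε) * (2 * a) < 1 * (2 * a) := by linarith
    have := lt_of_mul_lt_mul_right this (by linarith)
    linarith
  have hg1 : 0 < 2 * (a * L) + t - 2 * a := by rw [hLdef]; nlinarith
  have hg2 : 0 < a * L + 1 - a - 2 * b - L := by rw [hLdef]; nlinarith
  obtain ⟨δ, hδ, hδt, hδ1, hδ2⟩ : ∃ δ, 0 < δ ∧ δ ≤ t ∧ 2 * δ ≤ 2 * (a * L) + t - 2 * a ∧
      δ ≤ a * L + 1 - a - 2 * b - L := by
    refine ⟨min t (min ((2 * (a * L) + t - 2 * a) / 2) (a * L + 1 - a - 2 * b - L)),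
      lt_min ht0 (lt_min (by linarith) hg2), min_le_left _ _, ?_, ?_⟩
    · have := (min_le_right t _).trans
        (min_le_left ((2 * (a * L) + t - 2 * a) / 2) (a * L + 1 - a - 2 * b - L))
      linarith
    · exact (min_le_right t _).trans (min_le_right _ _)
  obtain ⟨n, hn⟩ := exists_nat_ge (2 * L / δ)
  rw [div_le_iff₀ hδ] at hn
  have hpos : ∀ x ∈ Set.Icc (-L) L, ∀ y ∈ Set.Icc (-L) L, 0 < gIter a b L n x y := by
    intro x hx y hy
    obtain ⟨u, v, h1, h2, h3, h4, h5⟩ := reach (s := t - δ) (b := b) ha0 ha3 hL hδ ht rfl hδt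
      (by linarith) (by linarith) n x hx
    rw [min_eq_left (by linarith)] at h4
    exact h5 y ⟨by linarith [hy.1], by linarith [hy.2]⟩
  have hcomp : IsCompact (Set.Icc (-L) L ×ˢ Set.Icc (-L) L) := isCompact_Icc.prod isCompact_Icc
  have h0 : (0 : ℝ) ∈ Set.Icc (-L) L := ⟨by linarith, hL.le⟩
  have hne : (Set.Icc (-L) L ×ˢ Set.Icc (-L) L).Nonempty := ⟨(0, 0), h0, h0⟩
  obtain ⟨p, hp, hpm⟩ := hcomp.exists_isMinOn hne (gIter_cont a b L n).continuousOn
  obtain ⟨q, hq, hqm⟩ := hcomp.exists_isMaxOn hne (gIter_cont a b L n).continuousOn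
  refine ⟨n, gIter a b L n p.1 p.2, gIter a b L n q.1 q.2, hpos _ hp.1 _ hp.2, hpm hq, ?_⟩
  subst hT'
  intro x hx y hy
  rw [iter_eq a b hL n x y hy]
  have hxy : (x, y) ∈ Set.Icc (-L) L ×ˢ Set.Icc (-L) L := ⟨hx, hy⟩
  exact ⟨hpm hxy, hqm hxy⟩
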